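/- arXiv:0806.0312 — 2 statements merged into one kernel-verified Lean document; each statement's English description precedes it below -/
import Mathlib

section
/- Let t₀ < t_s, let w ∈ ℝ, k ∈ ℝ, and let a, μ : (t₀,t_s) → ℝ be differentiable with a(t) > 0 and μ(t) > 0, satisfying the continuity equation μ′ + 3(a′/a)(1+w)μ = 0 (fluid with equation of state p = wμ) and the Friedmann equation (a′/a)² = μ/3 − k/a². Then [w < −1 and |w|·μ(t) → ∞ as t → t_s⁻] if and only if, as t → t_s⁻: a(t) → ∞, |a′(t)/a(t)| → ∞, |E|(t) → ∞ and |D|(t) → ∞, where |E| = |1+3w|·μ/(2√3) and |D| = μ/√3 (big-rip singularity of type (S₂,N₃,B₁)). -/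
open Filter Topology Set

/-!
The continuity equation integrates to `μ = c * a ^ (-3 (1 + w))` with `c > 0`. When `a → ∞`,
such a power can blow up only if its exponent is positive, that is, if `w < -1`; and for a
positive exponent `μ` and `a` blow up together. Both energies are fixed multiples of `μ`,
nonzero for `w < -1`, and the curvature term `k / a ^ 2` of the Friedmann equation vanishes in
the limit, so `|H|` blows up as well.
-/

theorem exists_eq_const_mul_rpow_of_hasDerivAt {s : Set ℝ} (hs : IsOpen s) (hs' : IsPreconnected s)
    {f f' g g' : ℝ → ℝ} {p : ℝ} (hf : ∀ x ∈ s, HasDerivAt f (f' x) x)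
    (hg : ∀ x ∈ s, HasDerivAt g (g' x) x) (hgpos : ∀ x ∈ s, 0 < g x)
    (hfg : ∀ x ∈ s, f' x = p * (g' x / g x) * f x) :
    ∃ c, ∀ x ∈ s, f x = c * g x ^ p := by
  have hderiv : ∀ x ∈ s, HasDerivAt (fun y => f y * g y ^ (-p)) 0 x := by
    intro x hx
    have hgx : g x ≠ 0 := (hgpos x hx).ne'
    refine ((hf x hx).fun_mul ((hg x hx).rpow_const (Or.inl hgx))).congr_deriv ?_
    rw [hfg x hx, Real.rpow_sub_one hgx]
    ring
  obtain ⟨c, hc⟩ := hs.exists_is_const_of_deriv_eq_zero hs'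
    (fun x hx => (hderiv x hx).differentiableAt.differentiableWithinAt)
    (fun x hx => (hderiv x hx).deriv)
  refine ⟨c, fun x hx => ?_⟩
  rw [← hc x hx, mul_assoc, ← Real.rpow_add (hgpos x hx), neg_add_cancel, Real.rpow_zero, mul_one]

section Asymptotics

variable {ι : Type*} {l : Filter ι} {f g : ι → ℝ} {p : ℝ}

theorem tendsto_rpow_const_atTop_iff (hp : 0 < p) (hg : ∀ᶠ x in l, 0 ≤ g x) :
    Tendsto (fun x => g x ^ p) l atTop ↔ Tendsto g l atTop := by
  refine ⟨fun h => ?_, (tendsto_rpow_atTop hp).comp⟩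
  refine ((tendsto_rpow_atTop (inv_pos.2 hp)).comp h).congr' ?_
  filter_upwards [hg] with x hx using Real.rpow_rpow_inv hx hp.ne'

theorem pos_of_tendsto_rpow_const_atTop [l.NeBot] (hg : Tendsto g l atTop)
    (hgp : Tendsto (fun x => g x ^ p) l atTop) : 0 < p := by
  by_contra! hp
  obtain ⟨x, hgx, hgpx⟩ := ((hg.eventually_ge_atTop 1).and (hgp.eventually_gt_atTop 1)).exists
  exact (Real.rpow_le_one_of_one_le_of_nonpos hgx hp).not_gt hgpx

theorem tendsto_abs_atTop_of_tendsto_sq_atTop (hf : Tendsto (fun x => f x ^ 2) l atTop) :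
    Tendsto (fun x => |f x|) l atTop :=
  (Real.tendsto_sqrt_atTop.comp hf).congr fun x => Real.sqrt_sq_eq_abs (f x)

theorem tendsto_abs_hubble_atTop {H μ a : ι → ℝ} {k : ℝ}
    (hFried : ∀ᶠ t in l, H t ^ 2 = μ t / 3 - k / a t ^ 2)
    (hμ : Tendsto μ l atTop) (ha : Tendsto a l atTop) :
    Tendsto (fun t => |H t|) l atTop := by
  have hcurv : Tendsto (fun t => -(k / a t ^ 2)) l (𝓝 (-0)) :=
    (((tendsto_pow_atTop two_ne_zero).comp ha).const_div_atTop k).neg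
  refine tendsto_abs_atTop_of_tendsto_sq_atTop (Tendsto.congr' ?_
    ((hμ.atTop_div_const three_pos).atTop_add hcurv))
  filter_upwards [hFried] with t ht
  rw [ht, sub_eq_add_neg]

end Asymptotics

theorem exists_pos_density_eq_const_mul_scale_rpow {t₀ t_s w : ℝ} (hlt : t₀ < t_s) {a μ : ℝ → ℝ}
    (ha : ∀ t ∈ Ioo t₀ t_s, DifferentiableAt ℝ a t)
    (hμ : ∀ t ∈ Ioo t₀ t_s, DifferentiableAt ℝ μ t)
    (hapos : ∀ t ∈ Ioo t₀ t_s, 0 < a t) (hμpos : ∀ t ∈ Ioo t₀ t_s, 0 < μ t)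
    (hcont : ∀ t ∈ Ioo t₀ t_s, deriv μ t + 3 * (deriv a t / a t) * (1 + w) * μ t = 0) :
    ∃ c > 0, ∀ t ∈ Ioo t₀ t_s, μ t = c * a t ^ (-3 * (1 + w)) := by
  obtain ⟨c, hc⟩ := exists_eq_const_mul_rpow_of_hasDerivAt (p := -3 * (1 + w))
    isOpen_Ioo isPreconnected_Ioo (fun t ht => (hμ t ht).hasDerivAt)
    (fun t ht => (ha t ht).hasDerivAt) hapos (fun t ht => by linear_combination hcont t ht)
  obtain ⟨m, hm⟩ := nonempty_Ioo.2 hlt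
  have hcm : 0 < c * a m ^ (-3 * (1 + w)) := hc m hm ▸ hμpos m hm
  exact ⟨c, pos_of_mul_pos_left hcm (Real.rpow_nonneg (hapos m hm).le _), hc⟩

/-- In an FRW universe filled with a fluid with equation of state
`p = wμ` (so `μ′ + 3H(1+w)μ = 0`, `H² = μ/3 − k/a²` on `(t₀,t_s)`),
`w < −1` and `|w|·μ → ∞` as `t → t_s⁻` iff `a → ∞`, `|H| → ∞`,
`|E| = |1+3w|·μ/(2√3) → ∞` and `|D| = μ/√3 → ∞` as `t → t_s⁻`
(big-rip singularity of type `(S₂,N₃,B₁)`). -/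
theorem phantom_big_rip
    (t₀ t_s w k : ℝ) (hlt : t₀ < t_s) (a μ : ℝ → ℝ)
    (ha : ∀ t ∈ Set.Ioo t₀ t_s, DifferentiableAt ℝ a t)
    (hμ : ∀ t ∈ Set.Ioo t₀ t_s, DifferentiableAt ℝ μ t)
    (hapos : ∀ t ∈ Set.Ioo t₀ t_s, 0 < a t)
    (hμpos : ∀ t ∈ Set.Ioo t₀ t_s, 0 < μ t)
    (hcont : ∀ t ∈ Set.Ioo t₀ t_s,
      deriv μ t + 3 * (deriv a t / a t) * (1 + w) * μ t = 0)
    (hFried : ∀ t ∈ Set.Ioo t₀ t_s,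
      (deriv a t / a t) ^ 2 = μ t / 3 - k / (a t) ^ 2) :
    (w < -1 ∧ Tendsto (fun t => |w| * μ t) (𝓝[<] t_s) atTop) ↔
      (Tendsto a (𝓝[<] t_s) atTop ∧
       Tendsto (fun t => |deriv a t / a t|) (𝓝[<] t_s) atTop ∧
       Tendsto (fun t => |1 + 3 * w| * μ t / (2 * Real.sqrt 3)) (𝓝[<] t_s) atTop ∧
       Tendsto (fun t => μ t / Real.sqrt 3) (𝓝[<] t_s) atTop) := by
  have hnear : ∀ᶠ t in 𝓝[<] t_s, t ∈ Ioo t₀ t_s := Ioo_mem_nhdsLT hlt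
  have hapos' : ∀ᶠ t in 𝓝[<] t_s, 0 ≤ a t := hnear.mono fun t ht => (hapos t ht).le
  obtain ⟨c, hc, hμa⟩ := exists_pos_density_eq_const_mul_scale_rpow hlt ha hμ hapos hμpos hcont
  have hμ_iff : Tendsto μ (𝓝[<] t_s) atTop ↔
      Tendsto (fun t => a t ^ (-3 * (1 + w))) (𝓝[<] t_s) atTop :=
    (tendsto_congr' (hnear.mono hμa)).trans (tendsto_const_mul_atTop_of_pos hc)
  constructor
  · rintro ⟨hw, hwμ⟩
    have hμ_top : Tendsto μ (𝓝[<] t_s) atTop :=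
      (tendsto_const_mul_atTop_of_pos (abs_pos.2 (by linarith))).1 hwμ
    have ha_top : Tendsto a (𝓝[<] t_s) atTop :=
      (tendsto_rpow_const_atTop_iff (by linarith) hapos').1 (hμ_iff.1 hμ_top)
    have hE : 0 < |1 + 3 * w| := abs_pos.2 (by linarith)
    exact ⟨ha_top, tendsto_abs_hubble_atTop (hnear.mono hFried) hμ_top ha_top,
      (hμ_top.const_mul_atTop hE).atTop_div_const (by positivity),
      hμ_top.atTop_div_const (by positivity)⟩
  · rintro ⟨ha_top, -, -, hD⟩
    have hμ_top : Tendsto μ (𝓝[<] t_s) atTop :=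
      (tendsto_div_const_atTop_of_pos (by positivity)).1 hD
    have hp : 0 < -3 * (1 + w) := pos_of_tendsto_rpow_const_atTop ha_top (hμ_iff.1 hμ_top)
    have hw : w < -1 := by linarith
    exact ⟨hw, hμ_top.const_mul_atTop (abs_pos.2 (by linarith))⟩
end

section
/- Let a_i > 0 and define a : ℝ → ℝ by a(t) = a_i·(1 + exp(√2·t/a_i))^{1/2}. Then the Hubble rate H(t) = a′(t)/a(t) equals (√2/(2a_i))·e^{√2 t/a_i}/(1 + e^{√2 t/a_i}); H(t) → 0 as t → −∞; and H is integrable on (−∞, 0]. Moreover a(t) ≥ a_i for all t, so the scale factor is bounded below by a positive constant. -/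
open Filter Topology Set MeasureTheory

/-!
The Hubble rate is the logarithmic derivative of the scale factor, so the constant factor `a_i`
drops out and the square root contributes a factor `1/2`. What remains is the logarithmic
derivative of `1 + exp (k * t)` with `k = √2 / a_i`, which is `k` times the logistic sigmoid at
`k * t`. The sigmoid tends to `0` at `-∞` and is dominated there by the exponential.
-/

theorem logDeriv_rpow_const {f : ℝ → ℝ} {x : ℝ} (p : ℝ) (hf : DifferentiableAt ℝ f x)
    (hx : 0 < f x) : logDeriv (fun y => f y ^ p) x = p * logDeriv f x := by
  rw [logDeriv_apply, logDeriv_apply, deriv_rpow_const hf (Or.inl hx.ne'),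
    Real.rpow_sub_one hx.ne']
  have hxp : f x ^ p ≠ 0 := (Real.rpow_pos_of_pos hx p).ne'
  field_simp

theorem sigmoid_eq_exp_div (x : ℝ) : Real.sigmoid x = Real.exp x / (1 + Real.exp x) := by
  rw [Real.sigmoid_def, Real.exp_neg]
  field_simp
  ring

theorem sigmoid_le_exp (x : ℝ) : Real.sigmoid x ≤ Real.exp x := by
  rw [sigmoid_eq_exp_div]
  exact div_le_self (Real.exp_nonneg x) (le_add_of_nonneg_right (Real.exp_nonneg x))

theorem logDeriv_one_add_exp {f : ℝ → ℝ} {x : ℝ} (hf : DifferentiableAt ℝ f x) :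
    logDeriv (fun y => 1 + Real.exp (f y)) x = deriv f x * Real.sigmoid (f x) := by
  rw [logDeriv_apply, deriv_const_add, deriv_exp hf, sigmoid_eq_exp_div]
  ring

theorem logDeriv_const_mul_one_add_exp_rpow {c : ℝ} (hc : c ≠ 0) (k p t : ℝ) :
    logDeriv (fun s => c * (1 + Real.exp (k * s)) ^ p) t = p * (k * Real.sigmoid (k * t)) := by
  rw [logDeriv_const_mul t c hc, logDeriv_rpow_const p (by fun_prop) (by positivity),
    logDeriv_one_add_exp (by fun_prop), deriv_const_mul_id]

theorem tendsto_sigmoid_const_mul_atBot {k : ℝ} (hk : 0 < k) :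
    Tendsto (fun t => Real.sigmoid (k * t)) atBot (𝓝 0) :=
  Real.tendsto_sigmoid_atBot.comp (tendsto_id.const_mul_atBot hk)

theorem integrableOn_sigmoid_const_mul_Iic {k : ℝ} (hk : 0 < k) (T : ℝ) :
    IntegrableOn (fun t => Real.sigmoid (k * t)) (Iic T) := by
  have hcont : Continuous fun t => Real.sigmoid (k * t) :=
    continuous_sigmoid.comp (continuous_const_mul k)
  refine (integrableOn_exp_mul_Iic hk T).mono' hcont.aestronglyMeasurable
    (Eventually.of_forall fun t => ?_)
  rw [Real.norm_of_nonneg (Real.sigmoid_nonneg _)]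
  exact sigmoid_le_exp (k * t)

theorem le_mul_one_add_exp_rpow {c p : ℝ} (hc : 0 ≤ c) (hp : 0 ≤ p) (x : ℝ) :
    c ≤ c * (1 + Real.exp x) ^ p :=
  le_mul_of_one_le_right hc
    (Real.one_le_rpow (le_add_of_nonneg_right (Real.exp_nonneg x)) hp)

/-- For Harris's closed radiation-plus-Λ solution
`a(t) = a_i·(1 + exp(√2 t/a_i))^{1/2}` with `a_i > 0`: the Hubble rate
`H = a′/a` equals `(√2/(2a_i))·e^{√2 t/a_i}/(1 + e^{√2 t/a_i})`, tends to `0`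
as `t → −∞`, and is integrable on `(−∞,0]`; moreover `a(t) ≥ a_i` for all
`t`, so the scale factor is bounded below by a positive constant. -/
theorem harris_solution_complete
    (a_i : ℝ) (hai : 0 < a_i) :
    ∀ a : ℝ → ℝ,
      (∀ t, a t = a_i * (1 + Real.exp (Real.sqrt 2 * t / a_i)) ^ ((1 : ℝ) / 2)) →
      (∀ t, deriv a t / a t =
        Real.sqrt 2 / (2 * a_i) * Real.exp (Real.sqrt 2 * t / a_i) /
          (1 + Real.exp (Real.sqrt 2 * t / a_i))) ∧
      Tendsto (fun t => deriv a t / a t) atBot (𝓝 0) ∧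
      IntegrableOn (fun t => deriv a t / a t) (Set.Iic 0) ∧
      (∀ t, a_i ≤ a t) := by
  intro a ha
  set k := Real.sqrt 2 / a_i with hk_def
  have hk : 0 < k := by positivity
  have exponent_eq (t : ℝ) : Real.sqrt 2 * t / a_i = k * t := mul_div_right_comm _ _ _
  simp only [exponent_eq] at ha ⊢
  have hubble (t : ℝ) : deriv a t / a t = 1 / 2 * (k * Real.sigmoid (k * t)) := by
    rw [← logDeriv_apply, funext ha, logDeriv_const_mul_one_add_exp_rpow hai.ne']
  refine ⟨fun t => ?_, ?_, ?_, fun t => ?_⟩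
  · rw [hubble, sigmoid_eq_exp_div, hk_def]
    ring
  · simpa only [hubble, mul_zero] using
      ((tendsto_sigmoid_const_mul_atBot hk).const_mul k).const_mul (1 / 2)
  · simp only [hubble]
    exact ((integrableOn_sigmoid_const_mul_Iic hk 0).const_mul k).const_mul (1 / 2)
  · rw [ha]
    exact le_mul_one_add_exp_rpow hai.le one_half_pos.le _
end
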